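/- arXiv:1212.6825 — 2 statements merged into one kernel-verified Lean document; each statement's English description precedes it below -/
import Mathlib

section
/- Let A be a subgroup of (ℤ/nℤ)^×, let d be a positive divisor of n, let ξ ∈ (ℤ/nℤ)^× be a unit, set r = ξ·(n/d), and let ψ_d : ℤ/nℤ → ℤ/dℤ be the natural ring homomorphism. Then for every y ∈ ℤ/nℤ one has σ_{Aξ}(y·(n/d)) = (|A|/|ψ_d(A)|)·σ_{Ar}(y); consequently the image of σ_{Ar} scaled by the factor |A|/|ψ_d(A)| is a subset of the image of σ_{Aξ}. -/
open Complex

/-- `e(θ) = exp(2πiθ)`. -/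
noncomputable def e2 (θ : ℝ) : ℂ := Complex.exp (2 * Real.pi * Complex.I * θ)

/-- The cyclic supercharacter attached to a subset `X` of `ℤ/nℤ`:
`σ_X(y) = Σ_{x ∈ X} e(xy/n)`. -/
noncomputable def superchar (n : ℕ) (X : Set (ZMod n)) (y : ZMod n) : ℂ :=
  ∑ᶠ x ∈ X, e2 (((x.val * y.val : ℕ) : ℝ) / (n : ℝ))

/-- The orbit `Ar = {ar : a ∈ A}` of `r` under a unit subgroup `A`. -/
def unitOrbit (n : ℕ) (A : Subgroup (ZMod n)ˣ) (r : ZMod n) : Set (ZMod n) :=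
  (fun a : (ZMod n)ˣ => (a : ZMod n) * r) '' (A : Set (ZMod n)ˣ)

/-! For `r = ξ·(n/d)`, the terms `e(aξ·(y·(n/d))/n)` and `e(ar·y/n)` agree for every `a ∈ A`.
Summed over `a ∈ A`, the first terms visit each point of `Aξ` once, while the second visit each
point of `Ar` as often as the stabilizer of `r` in `A` has elements. A unit `a` fixes `r` exactly
when `n ∣ (a - 1)·(n/d)`, that is `a ≡ 1 mod d`, so this stabilizer is the kernel of `ψ_d` on `A`
and has order `|A|/|ψ_d(A)|`. -/

section Orbit

open MulAction

variable {G : Type*} [Group G]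

theorem finsum_smul_eq_card_stabilizer_nsmul_finsum_orbit {α M : Type*} [Finite G] [MulAction G α]
    [AddCommMonoid M] (f : α → M) (x : α) :
    ∑ᶠ g : G, f (g • x) = Nat.card (stabilizer G x) • ∑ᶠ y ∈ orbit G x, f y := by
  have := Fintype.ofFinite G
  have : Finite (orbit G x) := Set.finite_range fun g : G => g • x
  have := Fintype.ofFinite (orbit G x)
  have := Fintype.ofFinite (stabilizer G x)
  let e := (orbitProdStabilizerEquivGroup G x).symm
  have fst_eq_smul (g : G) : ((e g).1 : α) = g • x := rfl
  calc ∑ᶠ g : G, f (g • x)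
      = ∑ p : orbit G x × stabilizer G x, f p.1 := by
        simp only [← fst_eq_smul, finsum_eq_sum_of_fintype, e.sum_comp fun p => f p.1]
    _ = Nat.card (stabilizer G x) • ∑ y : orbit G x, f y := by
        simp only [Fintype.sum_prod_type, Finset.sum_const, Finset.card_univ,
          Nat.card_eq_fintype_card, Finset.smul_sum]
    _ = Nat.card (stabilizer G x) • ∑ᶠ y ∈ orbit G x, f y := by
        rw [← finsum_set_coe_eq_finsum_mem, finsum_eq_sum_of_fintype]

theorem card_ker_subgroupOf_mul_card_map {H : Type*} [Group H] (f : G →* H) (A : Subgroup G) :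
    Nat.card (f.ker.subgroupOf A) * Nat.card (A.map f) = Nat.card A := by
  rw [← Subgroup.relIndex_ker, Subgroup.relIndex, Subgroup.card_mul_index]

theorem stabilizer_unit_eq_bot {R : Type*} [Monoid R] (A : Subgroup Rˣ) (u : Rˣ) :
    stabilizer A (u : R) = ⊥ := by
  refine (Subgroup.eq_bot_iff_forall _).2 fun a ha => ?_
  have hau : (a : Rˣ) * u = u := Units.ext ha
  exact Subtype.ext (mul_eq_right.1 hau)

theorem unitOrbit_eq_orbit (n : ℕ) (A : Subgroup (ZMod n)ˣ) (r : ZMod n) :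
    unitOrbit n A r = orbit A r := by
  ext x
  simp [unitOrbit, mem_orbit_iff, Subgroup.smul_def, Units.smul_def]

end Orbit

section Supercharacter

variable {n d : ℕ} [NeZero n]

theorem mul_natCast_div_eq_zero_iff_castHom_eq_zero (hdvd : d ∣ n) (c : ZMod n) :
    c * (n / d : ℕ) = 0 ↔ ZMod.castHom hdvd (ZMod d) c = 0 := by
  obtain ⟨k, rfl⟩ := ZMod.intCast_surjective c
  have hquot : ((n / d : ℕ) : ℤ) ≠ 0 :=
    Nat.cast_ne_zero.2 (Nat.div_ne_zero_iff_of_dvd hdvd |>.2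
      ⟨NeZero.ne n, ne_zero_of_dvd_ne_zero (NeZero.ne n) hdvd⟩)
  calc (k : ZMod n) * (n / d : ℕ) = 0
      ↔ (n : ℤ) ∣ k * (n / d : ℕ) := by
        rw [← ZMod.intCast_zmod_eq_zero_iff_dvd, Int.cast_mul, Int.cast_natCast (n / d)]
    _ ↔ (d : ℤ) * (n / d : ℕ) ∣ k * (n / d : ℕ) := by
        rw [← Nat.cast_mul, Nat.mul_div_cancel' hdvd]
    _ ↔ (d : ℤ) ∣ k := mul_dvd_mul_iff_right hquot
    _ ↔ ZMod.castHom hdvd (ZMod d) k = 0 := by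
        rw [map_intCast, ZMod.intCast_zmod_eq_zero_iff_dvd]

theorem stabilizer_unit_mul_natCast_div (hdvd : d ∣ n) (ξ : (ZMod n)ˣ) :
    MulAction.stabilizer (ZMod n)ˣ (ξ * (n / d : ℕ) : ZMod n) = (ZMod.unitsMap hdvd).ker := by
  ext a
  calc a • (ξ * (n / d : ℕ) : ZMod n) = ξ * (n / d : ℕ)
      ↔ (ξ : ZMod n) * (((a : ZMod n) - 1) * (n / d : ℕ)) = 0 := by
        rw [← sub_eq_zero, Units.smul_def, smul_eq_mul]
        ring_nf
    _ ↔ ZMod.castHom hdvd (ZMod d) (a - 1) = 0 := by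
        rw [Units.mul_right_eq_zero, mul_natCast_div_eq_zero_iff_castHom_eq_zero hdvd]
    _ ↔ ZMod.unitsMap hdvd a = 1 := by
        rw [map_sub, map_one, sub_eq_zero, Units.ext_iff]
        rfl

theorem card_stabilizer_mul_card_map_unitsMap (hdvd : d ∣ n) (A : Subgroup (ZMod n)ˣ)
    (ξ : (ZMod n)ˣ) :
    Nat.card (MulAction.stabilizer A (ξ * (n / d : ℕ) : ZMod n)) *
      Nat.card (A.map (ZMod.unitsMap hdvd)) = Nat.card A := by
  have hstab : MulAction.stabilizer A (ξ * (n / d : ℕ) : ZMod n) =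
      (ZMod.unitsMap hdvd).ker.subgroupOf A := by
    rw [← stabilizer_unit_mul_natCast_div hdvd ξ]
    rfl
  rw [hstab, card_ker_subgroupOf_mul_card_map]

theorem e2_val_mul_val_div (x y : ZMod n) :
    e2 (((x.val * y.val : ℕ) : ℝ) / n) = ZMod.stdAddChar (x * y) := by
  have hxy : x * y = ((x.val * y.val : ℤ) : ZMod n) := by
    push_cast
    simp only [ZMod.natCast_zmod_val]
  rw [hxy, ZMod.stdAddChar_coe, e2]
  push_cast
  ring_nf

theorem card_stabilizer_mul_superchar_unitOrbit (A : Subgroup (ZMod n)ˣ) (r y : ZMod n) :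
    Nat.card (MulAction.stabilizer A r) * superchar n (unitOrbit n A r) y =
      ∑ᶠ a : A, ZMod.stdAddChar (a • r * y) := by
  simp only [superchar, e2_val_mul_val_div]
  rw [unitOrbit_eq_orbit, ← nsmul_eq_mul]
  exact (finsum_smul_eq_card_stabilizer_nsmul_finsum_orbit
    (fun x => ZMod.stdAddChar (x * y)) r).symm

theorem superchar_unitOrbit_unit (A : Subgroup (ZMod n)ˣ) (ξ : (ZMod n)ˣ) (y : ZMod n) :
    superchar n (unitOrbit n A ξ) y = ∑ᶠ a : A, ZMod.stdAddChar (a • (ξ : ZMod n) * y) := by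
  rw [← card_stabilizer_mul_superchar_unitOrbit, stabilizer_unit_eq_bot,
    Subgroup.card_bot, Nat.cast_one, one_mul]

theorem superchar_unitOrbit_unit_mul_natCast_div (hdvd : d ∣ n) (A : Subgroup (ZMod n)ˣ)
    (ξ : (ZMod n)ˣ) (y : ZMod n) :
    superchar n (unitOrbit n A ξ) (y * (n / d : ℕ)) =
      Nat.card A / Nat.card (A.map (ZMod.unitsMap hdvd)) *
        superchar n (unitOrbit n A (ξ * (n / d : ℕ))) y := by
  have : NeZero d := ⟨ne_zero_of_dvd_ne_zero (NeZero.ne n) hdvd⟩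
  have hindex : (Nat.card A : ℂ) / Nat.card (A.map (ZMod.unitsMap hdvd)) =
      Nat.card (MulAction.stabilizer A (ξ * (n / d : ℕ) : ZMod n)) := by
    rw [div_eq_iff (Nat.cast_ne_zero.2 Nat.card_pos.ne'), ← Nat.cast_mul,
      card_stabilizer_mul_card_map_unitsMap]
  rw [hindex, card_stabilizer_mul_superchar_unitOrbit, superchar_unitOrbit_unit]
  refine finsum_congr fun a => congrArg _ ?_
  rw [smul_mul_assoc, smul_mul_assoc, mul_assoc, mul_comm y]

end Supercharacter

theorem stmt3 (n d : ℕ) (hn : 0 < n) (hd : 0 < d) (hdvd : d ∣ n)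
    (A : Subgroup (ZMod n)ˣ) (ξ : (ZMod n)ˣ) (r : ZMod n)
    (hr : r = (ξ : ZMod n) * ((n / d : ℕ) : ZMod n)) :
    (∀ y : ZMod n,
      superchar n (unitOrbit n A (ξ : ZMod n)) (y * ((n / d : ℕ) : ZMod n))
        = ((Nat.card A : ℂ) /
            (Nat.card (A.map (Units.map (ZMod.castHom hdvd (ZMod d)).toMonoidHom)) : ℂ))
          * superchar n (unitOrbit n A r) y)
    ∧ (fun z : ℂ =>
        ((Nat.card A : ℂ) /
          (Nat.card (A.map (Units.map (ZMod.castHom hdvd (ZMod d)).toMonoidHom)) : ℂ)) * z) ''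
        Set.range (superchar n (unitOrbit n A r))
      ⊆ Set.range (superchar n (unitOrbit n A (ξ : ZMod n))) := by
  have : NeZero n := ⟨hn.ne'⟩
  have hscale (y : ZMod n) := superchar_unitOrbit_unit_mul_natCast_div hdvd A ξ y
  subst hr
  refine ⟨hscale, ?_⟩
  rintro _ ⟨_, ⟨y, rfl⟩, rfl⟩
  exact ⟨y * (n / d : ℕ), hscale y⟩
end

section
/- Let ω ∈ (ℤ/nℤ)^×, let d be a positive divisor of n, let ξ ∈ (ℤ/nℤ)^× with r = ξ·(n/d), and let X = ⟨ω⟩r. Set k = gcd(w−1, d), where w ∈ {0,1,…,n−1} is the integer representative of ω. Then for every y ∈ ℤ/nℤ, σ_X(y + d/k) = e(c/k)·σ_X(y), where c is an integer representative of ξ; in particular, the image of σ_X is invariant under rotation by 2πc/k about the origin. -/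
open Complex

/-! Shifting `y` by `d/k` multiplies the term of `σ_X(y)` at `x` by `e(x(d/k)/n)`. An element of
the orbit is `x = a·c·(n/d)` with `a ≡ 1 (mod k)`, and `n/k` is killed by all multiples of `k`, so
`x·(d/k) = a·c·(n/k) = c·(n/k)` in `ℤ/nℤ`: every term picks up the same factor `e(c/k)`. -/

section AdditiveCharacter

variable {n : ℕ} [NeZero n]

lemma e2_intCast_div (j : ℤ) : e2 (j / n) = ZMod.stdAddChar (j : ZMod n) := by
  rw [ZMod.stdAddChar_coe, e2]
  congr 1
  push_cast
  ring

lemma e2_intCast_div_of_dvd {k : ℕ} (hkn : k ∣ n) (c : ℤ) :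
    e2 (c / k) = ZMod.stdAddChar ((c : ZMod n) * ((n / k : ℕ) : ZMod n)) := by
  have hn : (n : ℝ) ≠ 0 := NeZero.ne _
  have hk : (k : ℝ) ≠ 0 := mod_cast ne_zero_of_dvd_ne_zero (NeZero.ne n) hkn
  have hfrac : (c / k : ℝ) = ((c * (n / k : ℕ) : ℤ) : ℝ) / n := by
    rw [Int.cast_mul, Int.cast_natCast, Nat.cast_div hkn hk]
    field_simp
  rw [hfrac, e2_intCast_div, Int.cast_mul, Int.cast_natCast]

lemma superchar_eq_finsum_stdAddChar (X : Set (ZMod n)) (y : ZMod n) :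
    superchar n X y = ∑ᶠ x ∈ X, ZMod.stdAddChar (x * y) := by
  refine finsum_mem_congr rfl fun x _ => ?_
  simpa using e2_intCast_div (n := n) (x.val * y.val : ℕ)

lemma superchar_add_of_forall_mul_eq {X : Set (ZMod n)} {t s : ZMod n}
    (h : ∀ x ∈ X, x * t = s) (y : ZMod n) :
    superchar n X (y + t) = ZMod.stdAddChar s * superchar n X y := by
  simp only [superchar_eq_finsum_stdAddChar, mul_finsum_mem]
  refine finsum_mem_congr rfl fun x hx => ?_
  rw [mul_add, h x hx, AddChar.map_add_eq_mul, mul_comm]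

end AdditiveCharacter

section Congruence

variable {n k : ℕ}

lemma mul_natCast_div_eq_zero_of_castHom_eq_zero (hkn : k ∣ n) {x : ZMod n}
    (hx : ZMod.castHom hkn (ZMod k) x = 0) : x * ((n / k : ℕ) : ZMod n) = 0 := by
  obtain ⟨j, rfl⟩ := ZMod.intCast_surjective x
  rw [map_intCast, ZMod.intCast_zmod_eq_zero_iff_dvd] at hx
  obtain ⟨m, rfl⟩ := hx
  calc ((k * m : ℤ) : ZMod n) * ((n / k : ℕ) : ZMod n)
      = (m : ZMod n) * ((k * (n / k) : ℕ) : ZMod n) := by push_cast; ring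
    _ = 0 := by rw [Nat.mul_div_cancel' hkn, ZMod.natCast_self, mul_zero]

lemma unit_mul_natCast_div_of_mem_ker (hkn : k ∣ n) {a : (ZMod n)ˣ}
    (ha : a ∈ (ZMod.unitsMap hkn).ker) :
    (a : ZMod n) * ((n / k : ℕ) : ZMod n) = ((n / k : ℕ) : ZMod n) := by
  have hcast : ZMod.castHom hkn (ZMod k) a = 1 := congrArg Units.val ha
  rw [← sub_eq_zero, ← sub_one_mul]
  exact mul_natCast_div_eq_zero_of_castHom_eq_zero hkn (by rw [map_sub, hcast, map_one, sub_self])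

lemma mem_ker_unitsMap_of_dvd_val_sub_one [NeZero n] (hkn : k ∣ n) {a : (ZMod n)ˣ}
    (ha : k ∣ (a : ZMod n).val - 1) : a ∈ (ZMod.unitsMap hkn).ker := by
  rcases subsingleton_or_nontrivial (ZMod n) with _ | _
  · exact Subsingleton.elim a 1 ▸ one_mem _
  have hval : 1 ≤ (a : ZMod n).val :=
    Nat.one_le_iff_ne_zero.2 ((ZMod.val_ne_zero _).2 a.ne_zero)
  have hcast : (((a : ZMod n).val : ℕ) : ZMod k) = 1 := by
    rw [← Nat.sub_add_cancel hval, Nat.cast_add, (ZMod.natCast_eq_zero_iff _ _).2 ha, zero_add,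
      Nat.cast_one]
  rw [MonoidHom.mem_ker, Units.ext_iff, ZMod.unitsMap_val, ZMod.cast_eq_val, hcast, Units.val_one]

lemma mul_natCast_div_of_mem_unitOrbit {d : ℕ} (hdn : d ∣ n) (hkd : k ∣ d)
    {A : Subgroup (ZMod n)ˣ} (hA : A ≤ (ZMod.unitsMap (hkd.trans hdn)).ker) {c x : ZMod n}
    (hx : x ∈ unitOrbit n A (c * ((n / d : ℕ) : ZMod n))) :
    x * ((d / k : ℕ) : ZMod n) = c * ((n / k : ℕ) : ZMod n) := by
  obtain ⟨a, ha, rfl⟩ := hx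
  calc (a : ZMod n) * (c * ((n / d : ℕ) : ZMod n)) * ((d / k : ℕ) : ZMod n)
      = c * (a * ((n / d * (d / k) : ℕ) : ZMod n)) := by push_cast; ring
    _ = c * (a * ((n / k : ℕ) : ZMod n)) := by rw [Nat.div_mul_div hdn hkd]
    _ = c * ((n / k : ℕ) : ZMod n) := by rw [unit_mul_natCast_div_of_mem_ker _ (hA ha)]

end Congruence

theorem stmt6_general {n d k : ℕ} [NeZero n] (hdn : d ∣ n) (hkd : k ∣ d)
    {A : Subgroup (ZMod n)ˣ} (hA : A ≤ (ZMod.unitsMap (hkd.trans hdn)).ker) (c : ℤ) :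
    (∀ y : ZMod n,
      superchar n (unitOrbit n A (c * ((n / d : ℕ) : ZMod n))) (y + ((d / k : ℕ) : ZMod n))
        = e2 (c / k) * superchar n (unitOrbit n A (c * ((n / d : ℕ) : ZMod n))) y)
    ∧ (fun z : ℂ => e2 (c / k) * z) ''
        Set.range (superchar n (unitOrbit n A (c * ((n / d : ℕ) : ZMod n))))
        = Set.range (superchar n (unitOrbit n A (c * ((n / d : ℕ) : ZMod n)))) := by
  have hshift : Function.Semiconj (superchar n (unitOrbit n A (c * ((n / d : ℕ) : ZMod n))))
      (· + ((d / k : ℕ) : ZMod n)) (e2 (c / k) * ·) := by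
    intro y
    rw [e2_intCast_div_of_dvd (hkd.trans hdn)]
    exact superchar_add_of_forall_mul_eq
      (fun _ hx => mul_natCast_div_of_mem_unitOrbit hdn hkd hA hx) y
  exact ⟨hshift, (hshift.surjOn_range (add_right_surjective _)).image_eq_of_mapsTo
    hshift.mapsTo_range⟩

theorem stmt6 (n d : ℕ) (hn : 0 < n) (hd : 0 < d) (hdvd : d ∣ n)
    (ω ξ : (ZMod n)ˣ) (r : ZMod n)
    (hr : r = (ξ : ZMod n) * ((n / d : ℕ) : ZMod n))
    (k : ℕ) (hk : k = Nat.gcd ((ω : ZMod n).val - 1) d)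
    (c : ℤ) (hc : (c : ZMod n) = (ξ : ZMod n)) :
    (∀ y : ZMod n,
      superchar n (unitOrbit n (Subgroup.zpowers ω) r) (y + ((d / k : ℕ) : ZMod n))
        = e2 ((c : ℝ) / (k : ℝ)) * superchar n (unitOrbit n (Subgroup.zpowers ω) r) y)
    ∧ (fun z : ℂ => e2 ((c : ℝ) / (k : ℝ)) * z) ''
        Set.range (superchar n (unitOrbit n (Subgroup.zpowers ω) r))
        = Set.range (superchar n (unitOrbit n (Subgroup.zpowers ω) r)) := by
  subst hr hk
  have : NeZero n := ⟨hn.ne'⟩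
  exact hc ▸ stmt6_general hdvd (Nat.gcd_dvd_right _ d)
    (Subgroup.zpowers_le.2 (mem_ker_unitsMap_of_dvd_val_sub_one _ (Nat.gcd_dvd_left _ _))) c
end
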